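/- arXiv:2402.07064 — 2 statements merged into one kernel-verified Lean document; each statement's English description precedes it below -/
import Mathlib

section
/- Let f be a polynomial in m real variables that is SOS-convex (its Hessian matrix H(v) can be factored as H(v) = P(v)^T P(v) for some s×m matrix P(v) with polynomial entries) and is non-negative on all of ℝ^m. Then f is a Sum-of-Squares polynomial, i.e., f can be written as a finite sum of squares of polynomials. -/
open MvPolynomial Matrix
open scoped BigOperators

noncomputable section

/-- A polynomial is a Sum-of-Squares (SOS) polynomial if it is a finite sum of
squares of polynomials. -/
def IsSOS {m : ℕ} (p : MvPolynomial (Fin m) ℝ) : Prop :=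
  ∃ (J : ℕ) (f : Fin J → MvPolynomial (Fin m) ℝ), p = ∑ j, (f j) ^ 2

/-- The Hessian matrix of a polynomial in `m` variables. -/
def polyHessian {m : ℕ} (f : MvPolynomial (Fin m) ℝ) :
    Matrix (Fin m) (Fin m) (MvPolynomial (Fin m) ℝ) :=
  Matrix.of fun i j => pderiv i (pderiv j f)

/-- A polynomial is SOS-convex if its Hessian `H(v)` factors as `P(v)ᵀ P(v)` for
some `s × m` polynomial matrix `P(v)`. -/
def IsSOSConvex {m : ℕ} (f : MvPolynomial (Fin m) ℝ) : Prop :=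
  ∃ (s : ℕ) (P : Matrix (Fin s) (Fin m) (MvPolynomial (Fin m) ℝ)),
    polyHessian f = Pᵀ * P

/-!
Taylor's formula `f(u + d) = f(u) + ∇f(u)·d + ∫₀¹ (1 - t) dᵀ H(u + td) d dt` holds formally when `u`
and `d` have coordinates in any real algebra. Since `H = PᵀP`, the integrand is a sum of squares of
polynomials in `t`, and integrating a square against `1 - t` gives a quadratic form in its
coefficients whose matrix `(1 / ((i + j + 1) (i + j + 2)))` is a Gram matrix in `L²`. So the
remainder is a sum of squares in the algebra.

For real `u` and `d` this makes `f` convex. A convex polynomial bounded below attains its minimum: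
its sublevel sets recede only in directions along which `f` is constant, because a polynomial that
is bounded on a ray is constant on the line. At a minimizer `u` the gradient vanishes, and
`d = X - u` exhibits `f - f(u)` as a sum of squares.
-/

section SumSq

theorem isSOS_of_isSumSq {m : ℕ} {p : MvPolynomial (Fin m) ℝ} (hp : IsSumSq p) : IsSOS p := by
  induction hp with
  | zero => exact ⟨0, Fin.elim0, by simp⟩
  | sq_add a _ ih =>
    obtain ⟨J, g, rfl⟩ := ih
    exact ⟨J + 1, Fin.cons a g, by simp [Fin.sum_univ_succ, sq]⟩

theorem isSumSq_algebraMap {A : Type*} [Semiring A] [Algebra ℝ A] {r : ℝ} (hr : 0 ≤ r) :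
    IsSumSq (algebraMap ℝ A r) :=
  ((Real.isSquare_iff.mpr hr).map (algebraMap ℝ A)).isSumSq

open scoped MatrixOrder in
theorem isSumSq_sum_smul_mul_of_posSemidef {n A : Type*} [Fintype n] [CommSemiring A] [Algebra ℝ A]
    {M : Matrix n n ℝ} (hM : M.PosSemidef) (a : n → A) :
    IsSumSq (∑ i, ∑ j, M i j • (a i * a j)) := by
  classical
  obtain ⟨B, rfl⟩ := CStarAlgebra.nonneg_iff_eq_star_mul_self.mp hM.nonneg
  have hfactor : ∑ i, ∑ j, (star B * B) i j • (a i * a j) = ∑ k, (∑ i, B k i • a i) ^ 2 := by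
    simp only [star_eq_conjTranspose, mul_apply, conjTranspose_apply, star_trivial, sq,
      Finset.sum_mul_sum, Finset.sum_smul, smul_mul_smul_comm]
    exact Finset.sum_comm_cycle
  rw [hfactor]
  exact IsSumSq.sum_sq _ _

end SumSq

section Gram

open MeasureTheory

theorem posSemidef_integral_mul {α n : Type*} [MeasurableSpace α] {μ : Measure α} [Finite n]
    {φ : n → α → ℝ} (hφ : ∀ i, MemLp (φ i) 2 μ) :
    (Matrix.of fun i j ↦ ∫ x, φ i x * φ j x ∂μ).PosSemidef := by
  have hgram : Matrix.of (fun i j ↦ ∫ x, φ i x * φ j x ∂μ) =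
      Matrix.gram ℝ fun i ↦ (hφ i).toLp (φ i) := by
    ext i j
    rw [Matrix.gram_apply, L2.inner_def]
    refine integral_congr_ae ?_
    filter_upwards [(hφ i).coeFn_toLp, (hφ j).coeFn_toLp] with x hi hj
    simp [hi, hj, mul_comm]
  rw [hgram]
  exact Matrix.posSemidef_gram ℝ _

theorem integral_one_sub_mul_pow (k : ℕ) :
    ∫ t in (0 : ℝ)..1, (1 - t) * t ^ k = 1 / ((k + 1) * (k + 2)) := by
  have hsplit : ∀ t : ℝ, (1 - t) * t ^ k = t ^ k - t ^ (k + 1) := fun t ↦ by ring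
  simp_rw [hsplit]
  rw [intervalIntegral.integral_sub (by simp) (by simp), integral_pow, integral_pow]
  push_cast
  field_simp
  ring

theorem posSemidef_one_div_add_one_mul_add_two (N : ℕ) :
    (Matrix.of fun i j : Fin N ↦ (1 : ℝ) / (((i + j : ℕ) + 1) * ((i + j : ℕ) + 2))).PosSemidef := by
  let φ : Fin N → ℝ → ℝ := fun i t ↦ √(1 - t) * t ^ (i : ℕ)
  have hφ_cont : ∀ i, Continuous (φ i) := fun i ↦ by fun_prop
  have hφ : ∀ i, MemLp (φ i) 2 (volume.restrict (Set.Ioc 0 1)) := fun i ↦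
    (memLp_two_iff_integrable_sq (hφ_cont i).aestronglyMeasurable).mpr
      ((hφ_cont i).pow 2).integrableOn_Ioc
  convert posSemidef_integral_mul hφ using 4 with i j
  rw [← integral_one_sub_mul_pow, intervalIntegral.integral_of_le zero_le_one]
  refine setIntegral_congr_fun measurableSet_Ioc fun t ht ↦ ?_
  have hsqrt : √(1 - t) * √(1 - t) = 1 - t := Real.mul_self_sqrt (sub_nonneg.mpr ht.2)
  simp only [φ, pow_add]
  linear_combination -(t ^ (i : ℕ) * t ^ (j : ℕ)) * hsqrt

end Gram

section TaylorIntegral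

open scoped Polynomial

variable {A : Type*} [CommRing A] [Algebra ℝ A]

/-- The formal integral `∫₀¹ (1 - t) p(t) dt` of a polynomial `p` over a real algebra; it recovers
the second-order Taylor remainder from the second derivative. -/
def taylorIntegral : A[X] →ₗ[ℝ] A :=
  Polynomial.lsum fun k ↦ ((1 : ℝ) / ((k + 1) * (k + 2))) • LinearMap.id

theorem taylorIntegral_monomial (k : ℕ) (a : A) :
    taylorIntegral (Polynomial.monomial k a) = ((1 : ℝ) / ((k + 1) * (k + 2))) • a := by
  simp [taylorIntegral, Polynomial.lsum_apply, Polynomial.sum_monomial_index]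

theorem taylorIntegral_derivative_derivative (p : A[X]) :
    taylorIntegral (Polynomial.derivative (Polynomial.derivative p)) =
      p.eval 1 - p.eval 0 - (Polynomial.derivative p).eval 0 := by
  induction p using Polynomial.induction_on' with
  | add p q hp hq => simp only [map_add, Polynomial.eval_add, hp, hq]; ring
  | monomial n a =>
    match n with
    | 0 => simp
    | 1 => simp
    | k + 2 =>
      have hscale : a * ((k : A) + 1 + 1) * (k + 1) = (((k : ℝ) + 1) * (k + 2)) • a := by
        rw [Algebra.smul_def]
        simp only [map_mul, map_add, map_natCast, map_one, map_ofNat]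
        ring
      have hne : ((k : ℝ) + 1) * (k + 2) ≠ 0 := by positivity
      simp only [Polynomial.derivative_monomial_succ, Nat.cast_add, Nat.cast_one,
        taylorIntegral_monomial, hscale, smul_smul, one_div, inv_mul_cancel₀ hne]
      simp

theorem isSumSq_taylorIntegral_sq (q : A[X]) : IsSumSq (taylorIntegral (q ^ 2)) := by
  have hq : q = ∑ i : Fin (q.natDegree + 1), Polynomial.monomial i (q.coeff i) := by
    rw [Fin.sum_univ_eq_sum_range fun i ↦ Polynomial.monomial i (q.coeff i)]
    exact q.as_sum_range
  have hquad : taylorIntegral (q ^ 2) = ∑ i : Fin (q.natDegree + 1), ∑ j : Fin (q.natDegree + 1),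
      ((1 : ℝ) / (((i + j : ℕ) + 1) * ((i + j : ℕ) + 2))) • (q.coeff i * q.coeff j) := by
    conv_lhs => rw [hq]
    simp only [sq, Finset.sum_mul_sum, Polynomial.monomial_mul_monomial, map_sum,
      taylorIntegral_monomial]
  rw [hquad]
  exact isSumSq_sum_smul_mul_of_posSemidef (posSemidef_one_div_add_one_mul_add_two _) _

end TaylorIntegral

section Line

open scoped Polynomial

theorem derivation_aeval_eq_sum_pderiv {σ R B M : Type*} [Fintype σ] [CommSemiring R]
    [CommSemiring B] [Algebra R B] [AddCommMonoid M] [Module R M] [Module B M]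
    (D : Derivation R B M) (g : σ → B) (f : MvPolynomial σ R) :
    D (aeval g f) = ∑ i, aeval g (pderiv i f) • D (g i) := by
  classical
  induction f using MvPolynomial.induction_on with
  | C a => simp
  | add p q hp hq => simp [hp, hq, add_smul, Finset.sum_add_distrib]
  | mul_X p j hp =>
    simp [hp, pderiv_X, Pi.single_apply, add_smul, mul_smul, Finset.sum_add_distrib,
      Finset.smul_sum, apply_ite, ite_smul]

variable {σ R A : Type*} [CommSemiring R] [CommSemiring A] [Algebra R A]

/-- The univariate polynomial `t ↦ f (u + t d)`, for a base point `u` and a direction `d` with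
coordinates in an arbitrary algebra `A`. Besides `A = ℝ`, taking `A` to be the polynomial ring makes
the end point `u + d` generic. -/
def restrictLine (u d : σ → A) : MvPolynomial σ R →ₐ[R] A[X] :=
  aeval fun i ↦ Polynomial.C (u i) + Polynomial.C (d i) * Polynomial.X

theorem restrictLine_X (u d : σ → A) (i : σ) :
    restrictLine (R := R) u d (X i) =
      Polynomial.C (u i) + Polynomial.C (d i) * Polynomial.X :=
  aeval_X _ _

theorem eval_restrictLine (u d : σ → A) (f : MvPolynomial σ R) (a : A) :
    (restrictLine u d f).eval a = aeval (u + a • d) f := by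
  induction f using MvPolynomial.induction_on with
  | C r => simp [← algebraMap_eq]
  | add p q hp hq => simp [hp, hq]
  | mul_X p j hp => simp [hp, restrictLine_X, mul_comm (d j)]

theorem derivative_restrictLine [Fintype σ] (u d : σ → A) (f : MvPolynomial σ R) :
    Polynomial.derivative (restrictLine u d f) =
      ∑ i, Polynomial.C (d i) * restrictLine u d (pderiv i f) := by
  have hchain := derivation_aeval_eq_sum_pderiv
    ((Polynomial.derivative' (R := A)).restrictScalars R)
    (fun i ↦ Polynomial.C (u i) + Polynomial.C (d i) * Polynomial.X) f
  refine hchain.trans (Finset.sum_congr rfl fun i _ ↦ ?_)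
  rw [smul_eq_mul, mul_comm]
  simp [restrictLine]

theorem derivative_derivative_restrictLine_eq_sum_sq [Fintype σ] {ι : Type*} [Fintype ι]
    {f : MvPolynomial σ R} {P : Matrix ι σ (MvPolynomial σ R)}
    (hP : Matrix.of (fun i j ↦ pderiv i (pderiv j f)) = Pᵀ * P) (u d : σ → A) :
    Polynomial.derivative (Polynomial.derivative (restrictLine u d f)) =
      ∑ k, (∑ i, Polynomial.C (d i) * restrictLine u d (P k i)) ^ 2 := by
  have hentry : ∀ i j, pderiv i (pderiv j f) = ∑ k, P k i * P k j := fun i j ↦ by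
    simpa [Matrix.mul_apply] using congrFun₂ hP i j
  simp only [derivative_restrictLine, map_sum, Polynomial.derivative_C_mul, hentry, map_mul,
    Finset.mul_sum, sq, Finset.sum_mul]
  rw [Finset.sum_comm_cycle]
  refine Finset.sum_congr rfl fun k _ ↦ Finset.sum_congr rfl fun i _ ↦
    Finset.sum_congr rfl fun j _ ↦ ?_
  ring

end Line

section Minimizer

theorem convexOn_of_forall_exists_subgradient {E : Type*} [AddCommGroup E] [Module ℝ E] {s : Set E}
    (hs : Convex ℝ s) {f : E → ℝ}
    (hf : ∀ u ∈ s, ∃ φ : E →ₗ[ℝ] ℝ, ∀ x ∈ s, f u + φ (x - u) ≤ f x) : ConvexOn ℝ s f := by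
  refine ⟨hs, fun x hx y hy a b ha hb hab ↦ ?_⟩
  obtain ⟨φ, hφ⟩ := hf (a • x + b • y) (hs hx hy ha hb hab)
  calc f (a • x + b • y)
      = a * (f (a • x + b • y) + φ (x - (a • x + b • y))) +
          b * (f (a • x + b • y) + φ (y - (a • x + b • y))) := by
        simp only [map_sub, map_add, map_smul, smul_eq_mul]
        linear_combination (φ x * a + φ y * b - f (a • x + b • y)) * hab
    _ ≤ a * f x + b * f y := by gcongr <;> exact hφ _ ‹_›

/-- The directions along which `f` is constant on every line. -/
def constancySpace {E β : Type*} [AddCommGroup E] [Module ℝ E] (f : E → β) : Submodule ℝ E where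
  carrier := {d | ∀ (x : E) (t : ℝ), f (x + t • d) = f x}
  zero_mem' x t := by simp
  add_mem' hd he x t := by rw [smul_add, ← add_assoc, he, hd]
  smul_mem' c d hd x t := by rw [smul_smul, hd]

variable {E β : Type*} [NormedAddCommGroup E] [NormedSpace ℝ E] [LinearOrder β] {f : E → β}

theorem mem_constancySpace_of_mem_asymptoticCone (hf : LowerSemicontinuous f)
    (hconv : QuasiconvexOn ℝ Set.univ f)
    (hray : ∀ x d r, (∀ t : ℝ, 0 ≤ t → f (x + t • d) ≤ r) → ∀ t : ℝ, f (x + t • d) = f x)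
    {r : β} {d : E} (hd : d ∈ asymptoticCone ℝ {x | f x ≤ r}) : d ∈ constancySpace f := by
  intro x
  refine hray x d (max r (f x)) fun t ht ↦ ?_
  have hclosed : IsClosed {y | f y ≤ max r (f x)} :=
    lowerSemicontinuous_iff_isClosed_preimage.mp hf _
  have hconvex : Convex ℝ {y | f y ≤ max r (f x)} := by simpa using hconv (max r (f x))
  have hd' : d ∈ asymptoticCone ℝ {y | f y ≤ max r (f x)} :=
    asymptoticCone_mono (fun y hy ↦ le_max_of_le_left hy) hd
  simpa [add_comm] using
    hconvex.smul_vadd_mem_of_isClosed_of_mem_asymptoticCone hclosed ht hd' (le_max_right r (f x))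

theorem exists_forall_le_of_quasiconvexOn [FiniteDimensional ℝ E] (hf : LowerSemicontinuous f)
    (hconv : QuasiconvexOn ℝ Set.univ f)
    (hray : ∀ x d r, (∀ t : ℝ, 0 ≤ t → f (x + t • d) ≤ r) → ∀ t : ℝ, f (x + t • d) = f x) :
    ∃ u, ∀ x, f u ≤ f x := by
  obtain ⟨W, hW⟩ := (constancySpace f).exists_isCompl
  have hW_closed : IsClosed (W : Set E) := W.closed_of_finiteDimensional
  let S : Set E := W ∩ {x | f x ≤ f 0}
  have hS_closed : IsClosed S :=
    hW_closed.inter (lowerSemicontinuous_iff_isClosed_preimage.mp hf _)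
  have hS_bounded : Bornology.IsBounded S := by
    rw [isBounded_iff_asymptoticCone_subset_singleton]
    intro d hd
    have hdW : d ∈ W := by
      simpa [asymptoticCone_submodule, hW_closed.closure_eq] using
        asymptoticCone_mono (k := ℝ) Set.inter_subset_left hd
    have hdL : d ∈ constancySpace f := mem_constancySpace_of_mem_asymptoticCone hf hconv hray
      (asymptoticCone_mono Set.inter_subset_right hd)
    exact Submodule.disjoint_def.mp hW.disjoint d hdL hdW
  have hS_compact : IsCompact S := Metric.isCompact_of_isClosed_isBounded hS_closed hS_bounded
  have h0S : 0 ∈ S := ⟨W.zero_mem, le_rfl⟩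
  obtain ⟨u, -, hu⟩ := (hf.lowerSemicontinuousOn S).exists_isMinOn ⟨0, h0S⟩ hS_compact
  refine ⟨u, fun x ↦ ?_⟩
  obtain ⟨l, w, hl, hw, rfl⟩ := Submodule.codisjoint_iff_exists_add_eq.mp hW.codisjoint x
  have hlw : f (l + w) = f w := by simpa [add_comm] using hl w 1
  rw [hlw]
  rcases le_total (f w) (f 0) with hw0 | hw0
  · exact hu ⟨hw, hw0⟩
  · exact (hu h0S).trans hw0

end Minimizer

section PolynomialMinimizer

variable {σ : Type*}

theorem eval_line_eq_of_bddBelow_of_ray_le {f : MvPolynomial σ ℝ}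
    (hbdd : BddBelow (Set.range fun x ↦ eval x f)) {x d : σ → ℝ} {r : ℝ}
    (hray : ∀ t : ℝ, 0 ≤ t → eval (x + t • d) f ≤ r) (t : ℝ) :
    eval (x + t • d) f = eval x f := by
  obtain ⟨c, hc⟩ := hbdd
  have heval : ∀ s, (restrictLine x d f).eval s = eval (x + s • d) f := fun s ↦ by
    rw [eval_restrictLine, aeval_eq_eval]
  have hdegree : (restrictLine x d f).degree ≤ 0 := by
    rw [← Polynomial.isBoundedUnder_abs_atTop_iff]
    refine ⟨max |c| |r|, Filter.eventually_map.mpr ?_⟩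
    filter_upwards [Filter.eventually_ge_atTop 0] with s hs
    rw [heval]
    exact abs_le_max_abs_abs (hc ⟨_, rfl⟩) (hray s hs)
  have hconst : (restrictLine x d f).eval t = (restrictLine x d f).eval 0 := by
    rw [Polynomial.eq_C_of_degree_le_zero hdegree, Polynomial.eval_C, Polynomial.eval_C]
  simpa [heval] using hconst

variable [Finite σ]

theorem exists_forall_eval_le_of_quasiconvexOn {f : MvPolynomial σ ℝ}
    (hconv : QuasiconvexOn ℝ Set.univ fun x ↦ eval x f)
    (hbdd : BddBelow (Set.range fun x ↦ eval x f)) : ∃ u, ∀ x, eval u f ≤ eval x f := by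
  cases nonempty_fintype σ
  exact exists_forall_le_of_quasiconvexOn f.continuous_eval.lowerSemicontinuous hconv
    fun _ _ _ hray ↦ eval_line_eq_of_bddBelow_of_ray_le hbdd hray

theorem eval_pderiv_eq_zero_of_isLocalMin {f : MvPolynomial σ ℝ} {u : σ → ℝ}
    (hu : IsLocalMin (fun x ↦ eval x f) u) (i : σ) : eval u (pderiv i f) = 0 := by
  classical
  cases nonempty_fintype σ
  let p := restrictLine u (Pi.single i 1) f
  have hp : (fun t ↦ p.eval t) =
      (fun x ↦ eval x f) ∘ fun t : ℝ ↦ u + t • (Pi.single i 1 : σ → ℝ) := by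
    ext t
    simp [p, eval_restrictLine, aeval_eq_eval]
  have hmin : IsLocalMin (fun t ↦ p.eval t) 0 := by
    rw [hp]
    exact IsLocalMin.comp_continuous (by simpa using hu) (by fun_prop)
  have hderiv : p.derivative.eval 0 = 0 := hmin.hasDerivAt_eq_zero (p.hasDerivAt 0)
  simpa [p, derivative_restrictLine, eval_restrictLine, Polynomial.eval_finsetSum,
    Pi.single_apply, aeval_eq_eval] using hderiv

end PolynomialMinimizer

section HessianFactorization

variable {σ ι : Type*} [Fintype ι] {f : MvPolynomial σ ℝ}
  {P : Matrix ι σ (MvPolynomial σ ℝ)}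

theorem isSumSq_taylor_remainder [Fintype σ] {A : Type*} [CommRing A] [Algebra ℝ A]
    (hP : Matrix.of (fun i j ↦ pderiv i (pderiv j f)) = Pᵀ * P) (u d : σ → A) :
    IsSumSq (aeval (u + d) f - aeval u f - ∑ i, d i * aeval u (pderiv i f)) := by
  have hremainder : aeval (u + d) f - aeval u f - ∑ i, d i * aeval u (pderiv i f) =
      ∑ k, taylorIntegral ((∑ i, Polynomial.C (d i) * restrictLine u d (P k i)) ^ 2) := by
    rw [← map_sum, ← derivative_derivative_restrictLine_eq_sum_sq hP,
      taylorIntegral_derivative_derivative]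
    simp [derivative_restrictLine, eval_restrictLine, Polynomial.eval_finsetSum]
  rw [hremainder]
  exact IsSumSq.sum fun k _ ↦ isSumSq_taylorIntegral_sq _

theorem convexOn_eval_of_hessian_eq [Finite σ]
    (hP : Matrix.of (fun i j ↦ pderiv i (pderiv j f)) = Pᵀ * P) :
    ConvexOn ℝ Set.univ fun x ↦ eval x f := by
  cases nonempty_fintype σ
  refine convexOn_of_forall_exists_subgradient convex_univ fun u _ ↦
    ⟨∑ i, eval u (pderiv i f) • LinearMap.proj i, fun x _ ↦ ?_⟩
  have hremainder := (isSumSq_taylor_remainder hP u (x - u)).nonneg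
  simp only [add_sub_cancel, aeval_eq_eval] at hremainder
  suffices eval u f + ∑ i, (x i - u i) * eval u (pderiv i f) ≤ eval x f by
    simpa [mul_comm] using this
  simp only [Pi.sub_apply] at hremainder
  linarith

theorem isSumSq_sub_C_eval_of_pderiv_eq_zero [Finite σ]
    (hP : Matrix.of (fun i j ↦ pderiv i (pderiv j f)) = Pᵀ * P) {u : σ → ℝ}
    (hu : ∀ i, eval u (pderiv i f) = 0) : IsSumSq (f - C (eval u f)) := by
  cases nonempty_fintype σ
  have heval_C : ∀ p : MvPolynomial σ ℝ,
      aeval (algebraMap ℝ (MvPolynomial σ ℝ) ∘ u) p = C (eval u p) := fun p ↦ by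
    rw [aeval_algebraMap_apply, aeval_eq_eval, algebraMap_eq]
  have hremainder := isSumSq_taylor_remainder hP (algebraMap ℝ (MvPolynomial σ ℝ) ∘ u)
    (X - algebraMap ℝ (MvPolynomial σ ℝ) ∘ u)
  simp only [add_sub_cancel, heval_C, hu, map_zero, mul_zero, Finset.sum_const_zero, sub_zero,
    aeval_X_left_apply] at hremainder
  exact hremainder

end HessianFactorization

theorem nonneg_sosConvex_is_sos_general {σ ι : Type*} [Finite σ] [Fintype ι]
    {f : MvPolynomial σ ℝ} {P : Matrix ι σ (MvPolynomial σ ℝ)}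
    (hP : Matrix.of (fun i j ↦ pderiv i (pderiv j f)) = Pᵀ * P)
    (hnn : ∀ v : σ → ℝ, 0 ≤ eval v f) : IsSumSq f := by
  obtain ⟨u, hu⟩ := exists_forall_eval_le_of_quasiconvexOn
    (convexOn_eval_of_hessian_eq hP).quasiconvexOn ⟨0, Set.forall_mem_range.mpr hnn⟩
  have hu_local : IsLocalMin (fun x ↦ eval x f) u := Filter.Eventually.of_forall hu
  have hf : f = f - C (eval u f) + algebraMap ℝ _ (eval u f) := (sub_add_cancel _ _).symm
  rw [hf]
  exact (isSumSq_sub_C_eval_of_pderiv_eq_zero hP (eval_pderiv_eq_zero_of_isLocalMin hu_local)).add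
    (isSumSq_algebraMap (hnn u))

/-- A non-negative SOS-convex polynomial is an SOS polynomial. -/
theorem nonneg_sosConvex_is_sos {m : ℕ} (f : MvPolynomial (Fin m) ℝ)
    (hconv : IsSOSConvex f) (hnn : ∀ v : Fin m → ℝ, 0 ≤ eval v f) :
    IsSOS f := by
  obtain ⟨_, _, hP⟩ := hconv
  exact isSOS_of_isSumSq (nonneg_sosConvex_is_sos_general hP hnn)

end
end

section
/- Let f ∈ ℝ[v], v ∈ ℝ^m, be an SOS-convex polynomial of even degree d. Let N = {α ∈ (ℕ∪{0})^m : Σ_i α_i ≤ d}, let y(v) denote the canonical monomial basis vector of degree ≤ d/2, and let B_α be the symmetric matrices determined by y(v)y(v)^T = Σ_{α∈N} B_α v^α. Let y = (y_α)_{α∈N} be a real vector with y_0 = 1 and Σ_{α∈N} y_α B_α ⪰ 0, and define the linear functional L_y on polynomials of degree ≤ d by L_y(f) = Σ_{α∈N} (f)_α y_α, where (f)_α is the α-th coefficient of f. Then L_y(f) ≥ f(L_y(v_1),…,L_y(v_m)), where L_y(v_i) = y_{e_i} is the value of L_y on the i-th coordinate polynomial. -/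
open MvPolynomial Matrix
open scoped BigOperators

noncomputable section

/-- The degree `|α|` of a multi-index `α`. -/
def mdeg {m : ℕ} (α : Fin m →₀ ℕ) : ℕ := α.sum fun _ e => e

/-- The condition `Σ_{α} y_α B_α ⪰ 0`: the moment matrix of `y`, indexed by
monomials of degree at most `d/2` (with `y(v) y(v)ᵀ = Σ_α B_α v^α`), is
positive semi-definite.  This is expressed by non-negativity of the associated
quadratic form on finitely supported vectors of coefficients. -/
def MomMatPSD {m : ℕ} (d : ℕ) (y : (Fin m →₀ ℕ) → ℝ) : Prop :=
  ∀ c : (Fin m →₀ ℕ) →₀ ℝ, (∀ β ∈ c.support, mdeg β ≤ d / 2) →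
    0 ≤ ∑ β ∈ c.support, ∑ γ ∈ c.support, c β * c γ * y (β + γ)

/-! Let `L = L_y` and `a i = L (v i)`. Restrict `f` to the segment from `a` to the generic point `v`
and apply `L` to the coefficients: `φ t = L (f (a + t (v - a)))` runs from `φ 0 = f a` to
`φ 1 = L f`. Its derivative at `0` is `∑ i, ∂ᵢf(a) L (v i - a i) = 0`. Factoring the Hessian as
`Pᵀ P` gives `φ'' t = ∑ k, L (r k ^ 2)` with `r k = ∑ i, (v i - a i) P k i (a + t (v - a))`. The
polynomial `∑ k, r k ^ 2` has degree at most `deg f`, and top-degree terms of a sum of squares do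
not cancel, so each `r k` has degree at most `deg f / 2` and `φ'' ≥ 0`. Thus `φ` is convex with
critical point `0`, whence `φ 0 ≤ φ 1`. -/

open scoped MonomialOrder Polynomial

section SumOfSquares

variable {σ ι R : Type*}

lemma coeff_add_self_sum_sq [CommSemiring R] (m : MonomialOrder σ) {s : Finset ι}
    {r : ι → MvPolynomial σ R} {α : σ →₀ ℕ} (h : ∀ k ∈ s, m.degree (r k) ≼[m] α) :
    coeff (α + α) (∑ k ∈ s, r k ^ 2) = ∑ k ∈ s, coeff α (r k) ^ 2 := by
  rw [coeff_sum]
  refine Finset.sum_congr rfl fun k hk => ?_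
  rw [sq, sq, m.coeff_mul_of_add_of_degree_le (h k hk) (h k hk)]

lemma two_mul_totalDegree_le_totalDegree_sum_sq [CommRing R] [LinearOrder R]
    [IsStrictOrderedRing R] {s : Finset ι} (r : ι → MvPolynomial σ R) {k : ι} (hk : k ∈ s) :
    2 * (r k).totalDegree ≤ (∑ j ∈ s, r j ^ 2).totalDegree := by
  obtain ⟨_, _⟩ : ∃ _ : LinearOrder σ, WellFoundedGT σ := exists_wellFoundedGT σ
  obtain ⟨k₀, hk₀, hmax⟩ := s.exists_max_image
    (fun j => MonomialOrder.degLex.toSyn (MonomialOrder.degLex.degree (r j))) ⟨k, hk⟩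
  have hle : (r k).totalDegree ≤ (r k₀).totalDegree := degLex_totalDegree_monotone (hmax k hk)
  rcases eq_or_ne (r k₀) 0 with h0 | h0
  · rw [h0, totalDegree_zero, Nat.le_zero] at hle
    simp [hle]
  set α := MonomialOrder.degLex.degree (r k₀)
  -- Squares of leading coefficients are nonnegative, so they cannot cancel in the sum.
  have hcoeff : 0 < coeff (α + α) (∑ j ∈ s, r j ^ 2) := by
    rw [coeff_add_self_sum_sq MonomialOrder.degLex hmax]
    exact Finset.sum_pos' (fun j _ => sq_nonneg _)
      ⟨k₀, hk₀, sq_pos_of_ne_zero (MonomialOrder.coeff_degree_ne_zero_iff.2 h0)⟩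
  calc 2 * (r k).totalDegree ≤ 2 * (r k₀).totalDegree := by gcongr
    _ = (α + α).degree := by rw [map_add, ← degree_degLexDegree, two_mul]
    _ ≤ _ := le_totalDegree (mem_support_iff.2 hcoeff.ne')

end SumOfSquares

section Degree

variable {σ τ R : Type*} [CommSemiring R]

lemma totalDegree_pderiv_add_one_le {i : σ} {p : MvPolynomial σ R} (h : pderiv i p ≠ 0) :
    (pderiv i p).totalDegree + 1 ≤ p.totalDegree := by
  obtain ⟨α, hα, hdeg⟩ := Finset.exists_mem_eq_sup _ (support_nonempty.2 h) Finsupp.degree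
  have hα' : α + Finsupp.single i 1 ∈ p.support := by
    rw [mem_support_iff, coeff_pderiv] at hα
    exact mem_support_iff.2 (left_ne_zero_of_mul hα)
  calc (pderiv i p).totalDegree + 1 = (α + Finsupp.single i 1).degree := by
        rw [map_add, Finsupp.degree_single]; exact congrArg (· + 1) hdeg
    _ ≤ p.totalDegree := le_totalDegree hα'

lemma totalDegree_aeval_le {n : ℕ} {g : σ → MvPolynomial τ R} (hg : ∀ i, (g i).totalDegree ≤ n)
    (p : MvPolynomial σ R) : (aeval g p).totalDegree ≤ p.totalDegree * n := by
  rw [aeval_def, eval₂_eq]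
  refine totalDegree_finsetSum_le fun α hα => ?_
  calc (algebraMap R _ (coeff α p) * ∏ i ∈ α.support, g i ^ α i).totalDegree
      ≤ ∑ i ∈ α.support, (g i ^ α i).totalDegree := by
        refine (totalDegree_mul _ _).trans ?_
        rw [algebraMap_eq, totalDegree_C, zero_add]
        exact totalDegree_finsetProd _ _
    _ ≤ ∑ i ∈ α.support, α i * n := by
        gcongr with i
        exact (totalDegree_pow _ _).trans (Nat.mul_le_mul_left _ (hg i))
    _ = α.degree * n := by rw [← Finset.sum_mul]; rfl
    _ ≤ p.totalDegree * n := Nat.mul_le_mul_right _ (le_totalDegree hα)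

lemma totalDegree_mul_mul_aeval_pderiv_pderiv_le {g : σ → MvPolynomial τ R}
    (hg : ∀ i, (g i).totalDegree ≤ 1) {u v : MvPolynomial τ R} (hu : u.totalDegree ≤ 1)
    (hv : v.totalDegree ≤ 1) (p : MvPolynomial σ R) (i j : σ) :
    (u * v * aeval g (pderiv i (pderiv j p))).totalDegree ≤ p.totalDegree := by
  rcases eq_or_ne (pderiv i (pderiv j p)) 0 with h | h
  · simp [h]
  have hj : pderiv j p ≠ 0 := fun h0 => h (by rw [h0, map_zero])
  calc (u * v * aeval g (pderiv i (pderiv j p))).totalDegree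
      ≤ u.totalDegree + v.totalDegree + (aeval g (pderiv i (pderiv j p))).totalDegree := by
        grw [totalDegree_mul, totalDegree_mul]
    _ ≤ 1 + 1 + (pderiv i (pderiv j p)).totalDegree * 1 := by
        grw [hu, hv, totalDegree_aeval_le hg]
    _ ≤ p.totalDegree := by
        grw [← totalDegree_pderiv_add_one_le hj, ← totalDegree_pderiv_add_one_le h]
        omega

end Degree

section Line

variable {σ R A : Type*} [CommSemiring R] [CommSemiring A] [Algebra R A]

lemma derivation_aeval [Fintype σ] {M : Type*} [AddCommMonoid M] [Module A M] [Module R M]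
    (D : Derivation R A M) (g : σ → A) (p : MvPolynomial σ R) :
    D (aeval g p) = ∑ i, aeval g (pderiv i p) • D (g i) := by
  classical
  induction p using MvPolynomial.induction_on with
  | C c => simp
  | add p q hp hq => simp [hp, hq, add_smul, Finset.sum_add_distrib]
  | mul_X p j hp =>
    simp [hp, add_smul, Finset.sum_add_distrib, pderiv_X, Pi.single_apply, Finset.smul_sum,
      smul_smul, apply_ite, ite_smul]

/-- The restriction `s ↦ p (a + s w)` of the polynomial `p` to the line through `a` with
direction `w`, as a polynomial in `s`. -/
def restrictToLine (a w : σ → A) : MvPolynomial σ R →ₐ[R] A[X] :=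
  aeval fun i => Polynomial.C (a i) + Polynomial.C (w i) * Polynomial.X

variable (a w : σ → A)

lemma eval_restrictToLine (t : A) (p : MvPolynomial σ R) :
    (restrictToLine a w p).eval t = aeval (fun i => a i + w i * t) p := by
  rw [← Polynomial.coe_aeval_eq_eval, ← AlgHom.restrictScalars_apply R, restrictToLine,
    comp_aeval_apply]
  simp

variable [Fintype σ]

lemma derivative_restrictToLine (p : MvPolynomial σ R) :
    (restrictToLine a w p).derivative =
      ∑ i, Polynomial.C (w i) * restrictToLine a w (pderiv i p) := by
  have chain := derivation_aeval (Polynomial.derivative'.restrictScalars R)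
    (fun i => Polynomial.C (a i) + Polynomial.C (w i) * Polynomial.X) p
  refine chain.trans (Finset.sum_congr rfl fun i _ => ?_)
  rw [smul_eq_mul, mul_comm]
  simp [restrictToLine]

lemma derivative_derivative_restrictToLine (p : MvPolynomial σ R) :
    (restrictToLine a w p).derivative.derivative =
      ∑ i, ∑ j, Polynomial.C (w i * w j) * restrictToLine a w (pderiv i (pderiv j p)) := by
  rw [Finset.sum_comm]
  simp only [derivative_restrictToLine, Polynomial.derivative_sum,
    Polynomial.derivative_C_mul, Finset.mul_sum, Polynomial.C_mul]
  exact Finset.sum_congr rfl fun i _ => Finset.sum_congr rfl fun j _ => by ring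

lemma eval_derivative_derivative_restrictToLine (t : A) (p : MvPolynomial σ R) :
    (restrictToLine a w p).derivative.derivative.eval t =
      ∑ i, ∑ j, w i * w j * aeval (fun k => a k + w k * t) (pderiv i (pderiv j p)) := by
  simp [derivative_derivative_restrictToLine, Polynomial.eval_finsetSum, eval_restrictToLine]

lemma eval_derivative_derivative_restrictToLine_eq_sum_sq {ι : Type*} [Fintype ι]
    {p : MvPolynomial σ R} {P : Matrix ι σ (MvPolynomial σ R)}
    (hP : Matrix.of (fun i j => pderiv i (pderiv j p)) = Pᵀ * P) (t : A) :
    (restrictToLine a w p).derivative.derivative.eval t =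
      ∑ k, (∑ i, w i * aeval (fun j => a j + w j * t) (P k i)) ^ 2 := by
  have hess (i j : σ) : pderiv i (pderiv j p) = ∑ k, P k i * P k j := congrFun₂ hP i j
  simp only [sq, Finset.sum_mul_sum]
  simp only [eval_derivative_derivative_restrictToLine, hess, map_sum, map_mul, Finset.mul_sum]
  rw [Finset.sum_comm_cycle]
  exact Finset.sum_congr rfl fun k _ => Finset.sum_congr rfl fun i _ =>
    Finset.sum_congr rfl fun j _ => by ring

end Line

section Convexity

lemma hasDerivAt_linearMap_eval {𝕜 A E : Type*} [NontriviallyNormedField 𝕜] [CommSemiring A]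
    [Algebra 𝕜 A] [NormedAddCommGroup E] [NormedSpace 𝕜 E] (L : A →ₗ[𝕜] E) (q : A[X]) (t : 𝕜) :
    HasDerivAt (fun t => L (q.eval (algebraMap 𝕜 A t)))
      (L (q.derivative.eval (algebraMap 𝕜 A t))) t := by
  induction q using Polynomial.induction_on' with
  | add p q hp hq => simpa using hp.fun_add hq
  | monomial n c =>
    have map_pow_mul (u : 𝕜) (k : ℕ) (b : A) : L (algebraMap 𝕜 A u ^ k * b) = u ^ k • L b := by
      rw [← map_pow, ← Algebra.smul_def, map_smul]
    simpa [Polynomial.derivative_monomial, map_pow_mul, mul_comm c, ← nsmul_eq_mul, mul_smul] using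
      (hasDerivAt_pow n t).smul_const (L c)

variable {A : Type*} [CommSemiring A] [Algebra ℝ A]

lemma convexOn_linearMap_eval {L : A →ₗ[ℝ] ℝ} {q : A[X]}
    (h : ∀ t : ℝ, 0 ≤ L (q.derivative.derivative.eval (algebraMap ℝ A t))) :
    ConvexOn ℝ Set.univ fun t : ℝ => L (q.eval (algebraMap ℝ A t)) :=
  convexOn_of_hasDerivWithinAt2_nonneg convex_univ
    (fun t _ => (hasDerivAt_linearMap_eval L q t).continuousAt.continuousWithinAt)
    (fun t _ => (hasDerivAt_linearMap_eval L q t).hasDerivWithinAt)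
    (fun t _ => (hasDerivAt_linearMap_eval L q.derivative t).hasDerivWithinAt)
    fun t _ => h t

lemma linearMap_eval_zero_le_eval_one {L : A →ₗ[ℝ] ℝ} {q : A[X]}
    (h₁ : L (q.derivative.eval 0) = 0)
    (h₂ : ∀ t : ℝ, 0 ≤ L (q.derivative.derivative.eval (algebraMap ℝ A t))) :
    L (q.eval 0) ≤ L (q.eval 1) := by
  have hderiv : derivWithin (fun t : ℝ => L (q.eval (algebraMap ℝ A t))) (Set.Ioi 0) 0 = 0 := by
    rw [(hasDerivAt_linearMap_eval L q 0).hasDerivWithinAt.derivWithin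
      (uniqueDiffWithinAt_Ioi 0), map_zero, h₁]
  simpa using (convexOn_linearMap_eval h₂).isMinOn_of_rightDeriv_eq_zero (by simp) hderiv
    (Set.mem_univ 1)

end Convexity

section Riesz

variable {σ R : Type*} [CommSemiring R]

/-- The Riesz functional `L_y` of the sequence `y`: the linear functional with `L_y (v ^ α) = y α`,
which turns positivity of the moment matrix of `y` into nonnegativity on squares. -/
def rieszFunctional (y : (σ →₀ ℕ) → R) : MvPolynomial σ R →ₗ[R] R :=
  (basisMonomials σ R).constr R y

variable (y : (σ →₀ ℕ) → R)

lemma rieszFunctional_apply (p : MvPolynomial σ R) :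
    rieszFunctional y p = ∑ α ∈ p.support, coeff α p * y α :=
  (basisMonomials σ R).constr_apply R y p

lemma rieszFunctional_monomial (α : σ →₀ ℕ) (c : R) :
    rieszFunctional y (monomial α c) = c * y α := by
  have basis : rieszFunctional y (monomial α 1) = y α := (basisMonomials σ R).constr_basis R y α
  rw [← mul_one c, ← smul_eq_mul, ← smul_monomial, map_smul, basis, smul_eq_mul, smul_eq_mul,
    mul_one]

lemma rieszFunctional_one : rieszFunctional y 1 = y 0 :=
  (rieszFunctional_monomial y 0 1).trans (one_mul _)

lemma rieszFunctional_X (i : σ) : rieszFunctional y (X i) = y (Finsupp.single i 1) :=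
  (rieszFunctional_monomial y _ 1).trans (one_mul _)

lemma rieszFunctional_sq (p : MvPolynomial σ R) :
    rieszFunctional y (p ^ 2) =
      ∑ α ∈ p.support, ∑ β ∈ p.support, coeff α p * coeff β p * y (α + β) := by
  conv_lhs => rw [p.as_sum, sq, Finset.sum_mul_sum]
  simp only [map_sum, monomial_mul, rieszFunctional_monomial]

end Riesz

lemma MomMatPSD.rieszFunctional_sq_nonneg {m d : ℕ} {y : (Fin m →₀ ℕ) → ℝ} (hy : MomMatPSD d y)
    {p : MvPolynomial (Fin m) ℝ} (hp : p.totalDegree ≤ d / 2) :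
    0 ≤ rieszFunctional y (p ^ 2) := by
  rw [rieszFunctional_sq]
  exact hy (AddMonoidAlgebra.coeff p) fun β hβ => (le_totalDegree hβ).trans hp

section Jensen

variable {σ ι : Type*} [Finite σ] [Fintype ι] {f : MvPolynomial σ ℝ}
  {P : Matrix ι σ (MvPolynomial σ ℝ)}

lemma linearMap_eval_derivative_derivative_restrictToLine_nonneg {τ : Type*}
    (hP : Matrix.of (fun i j => pderiv i (pderiv j f)) = Pᵀ * P) {L : MvPolynomial τ ℝ →ₗ[ℝ] ℝ}
    (hL : ∀ p : MvPolynomial τ ℝ, 2 * p.totalDegree ≤ f.totalDegree → 0 ≤ L (p ^ 2))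
    {a w : σ → MvPolynomial τ ℝ} (ha : ∀ i, (a i).totalDegree ≤ 1)
    (hw : ∀ i, (w i).totalDegree ≤ 1) (t : ℝ) :
    0 ≤ L ((restrictToLine a w f).derivative.derivative.eval (C t)) := by
  cases nonempty_fintype σ
  have hline (i : σ) : (a i + w i * C t).totalDegree ≤ 1 := by
    grw [totalDegree_add, totalDegree_mul, ha, hw, totalDegree_C]
    rfl
  have hdeg : ((restrictToLine a w f).derivative.derivative.eval (C t)).totalDegree ≤
      f.totalDegree := by
    rw [eval_derivative_derivative_restrictToLine]
    exact totalDegree_finsetSum_le fun i _ => totalDegree_finsetSum_le fun j _ =>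
      totalDegree_mul_mul_aeval_pderiv_pderiv_le hline (hw i) (hw j) f i j
  rw [eval_derivative_derivative_restrictToLine_eq_sum_sq a w hP] at hdeg ⊢
  rw [map_sum]
  exact Finset.sum_nonneg fun k hk =>
    hL _ ((two_mul_totalDegree_le_totalDegree_sum_sq _ hk).trans hdeg)

theorem sosConvex_jensen_general
    (hP : Matrix.of (fun i j => pderiv i (pderiv j f)) = Pᵀ * P)
    {L : MvPolynomial σ ℝ →ₗ[ℝ] ℝ} (hL1 : L 1 = 1)
    (hL : ∀ p : MvPolynomial σ ℝ, 2 * p.totalDegree ≤ f.totalDegree → 0 ≤ L (p ^ 2)) :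
    eval (fun i => L (X i)) f ≤ L f := by
  cases nonempty_fintype σ
  let a (i : σ) : MvPolynomial σ ℝ := C (L (X i))
  let w (i : σ) : MvPolynomial σ ℝ := X i - a i
  have hLC (c : ℝ) : L (C c) = c := by rw [C_eq_smul_one, map_smul, hL1, smul_eq_mul, mul_one]
  have hLw (i : σ) : L (w i) = 0 := by rw [map_sub, hLC, sub_self]
  have aeval_a (p : MvPolynomial σ ℝ) : aeval a p = C (eval (fun i => L (X i)) p) :=
    aeval_algebraMap_apply _ _ p
  have hdeg_a (i : σ) : (a i).totalDegree ≤ 1 := by grw [totalDegree_C, zero_le_one]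
  have hdeg_w (i : σ) : (w i).totalDegree ≤ 1 := by grw [totalDegree_sub_C_le, totalDegree_X]
  have critical : L ((restrictToLine a w f).derivative.eval 0) = 0 := by
    simp only [derivative_restrictToLine, Polynomial.eval_finsetSum, Polynomial.eval_mul,
      Polynomial.eval_C, eval_restrictToLine, mul_zero, add_zero, aeval_a, map_sum]
    exact Finset.sum_eq_zero fun i _ => by rw [mul_comm, C_mul', map_smul, hLw, smul_zero]
  have jensen := linearMap_eval_zero_le_eval_one critical
    (linearMap_eval_derivative_derivative_restrictToLine_nonneg hP hL hdeg_a hdeg_w)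
  simpa only [eval_restrictToLine, mul_zero, add_zero, mul_one, w, add_sub_cancel, aeval_a, hLC,
    aeval_X_left_apply] using jensen

end Jensen

/-- Generalized Jensen inequality for SOS-convex polynomials:
if `y_0 = 1` and `Σ_α y_α B_α ⪰ 0`, then `L_y(f) ≥ f(L_y(v))`. -/
theorem sosConvex_jensen {m d : ℕ} (hd : Even d)
    (f : MvPolynomial (Fin m) ℝ) (hconv : IsSOSConvex f)
    (hdeg : f.totalDegree ≤ d) (y : (Fin m →₀ ℕ) → ℝ)
    (hy0 : y 0 = 1) (hPSD : MomMatPSD d y) :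
    eval (fun i => y (Finsupp.single i 1)) f ≤
      ∑ α ∈ f.support, MvPolynomial.coeff α f * y α := by
  obtain ⟨s, P, hP⟩ := hconv
  have hL1 : rieszFunctional y 1 = 1 := (rieszFunctional_one y).trans hy0
  rw [← rieszFunctional_apply]
  simpa only [rieszFunctional_X] using
    sosConvex_jensen_general hP hL1 fun p hp => hPSD.rieszFunctional_sq_nonneg (by omega)

end
end
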